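/- Let R = k[x_1, …, x_d] with d ≥ 2 be a polynomial ring over a field k, standard graded, and let M be a nonzero finitely generated graded R-module generated in degree a ≥ 0. If M is torsion-free, then e_1(M) ≤ a·e_0(M), with equality if and only if M is a free R-module. -/

import Mathlib

/-- `IsGrading k R M ℳ`: the family of `k`-subspaces `ℳ j` is a grading of the module `M`
over the standard graded polynomial ring, compatible with the grading of the polynomial
ring by homogeneous components. -/
def IsGrading (k : Type*) [Field k] (d : ℕ) (M : Type*) [AddCommGroup M]
    [Module (MvPolynomial (Fin d) k) M] [Module k M]
    [IsScalarTower k (MvPolynomial (Fin d) k) M] (ℳ : ℕ → Submodule k M) : Prop :=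
  DirectSum.IsInternal (fun j => ℳ j) ∧
    ∀ (i j : ℕ) (r : MvPolynomial (Fin d) k),
      r ∈ MvPolynomial.homogeneousSubmodule (Fin d) k i →
      ∀ m ∈ ℳ j, r • m ∈ ℳ (i + j)

/-- `IsHilbertPolyGraded k ℳ t e`: the integers `e 0, …, e t` are the Hilbert coefficients
of the graded module with components `ℳ j`:
`∑_{j=0}^{n} dim_k ℳ j = ∑_{i=0}^{t} (-1)^i eᵢ binom(n + t - i, t - i)` for all large `n`. -/
def IsHilbertPolyGraded (k : Type*) [Field k] {M : Type*} [AddCommGroup M] [Module k M]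
    (ℳ : ℕ → Submodule k M) (t : ℕ) (e : ℕ → ℤ) : Prop :=
  ∃ n₀ : ℕ, ∀ n ≥ n₀,
    (∑ j ∈ Finset.range (n + 1), (Module.finrank k (ℳ j) : ℤ)) =
      ∑ i ∈ Finset.range (t + 1), (-1) ^ i * e i * ((n + (t - i)).choose (t - i) : ℤ)

/-!
Write `eᵢ = e i`. Choose a maximal linearly independent subset of the degree `a` component of `M`,
of size `r`, and let `F` be the free submodule that it spans. Some `f ≠ 0` multiplies `M` into `F`,
so `e₀ = r`, and up to `o(m ^ (d - 1))` the difference `dim M_{≤ m + a} - r * binom(m + d, d)` is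
`(a * e₀ - e₁) * m ^ (d - 1) / (d - 1)!`.

If `M` is free, a `k`-basis of its degree `a` component is an `R`-basis of `M`, so `F = M` can be
taken and the difference vanishes. If `M` is not free, some `w` of degree `a` lies outside `F`. As
`R` is factorial and `F` is free, the ideal of all `g` with `g • w ∈ F` lies in a proper principal
ideal `(q)`. Hence the multiples of `w` contribute at least
`dim (R / (q))_{≤ m} ≥ binom(m + d - 1, d - 1)` to the difference, which forces `1 ≤ a * e₀ - e₁`.
-/

open Filter Topology Module

section Domain

variable {R M : Type*} [CommRing R] [IsDomain R] [AddCommGroup M] [Module R M]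

theorem exists_linearIndepOn_smul_mem_span [Module.Finite R M] {S : Set M}
    (hS : Submodule.span R S = ⊤) :
    ∃ s ⊆ S, LinearIndepOn R id s ∧ ∃ f : R, f ≠ 0 ∧ ∀ x : M, f • x ∈ Submodule.span R s := by
  obtain ⟨s, hs, hmax⟩ := exists_maximal_linearIndepOn R (Subtype.val : S → M)
  refine ⟨Subtype.val '' s, Subtype.coe_image_subset S s, hs.id_image, ?_⟩
  set N := Submodule.span R (Subtype.val '' s)
  have hle : Submodule.span R S ≤ (Submodule.torsion R (M ⧸ N)).comap N.mkQ := by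
    refine Submodule.span_le.mpr fun x hx => ?_
    obtain ⟨g, hg, hgx⟩ : ∃ g : R, g ≠ 0 ∧ g • x ∈ N := by
      by_cases hxs : ⟨x, hx⟩ ∈ s
      · exact ⟨1, one_ne_zero, N.smul_mem 1 (Submodule.subset_span ⟨_, hxs, rfl⟩)⟩
      · exact hmax ⟨x, hx⟩ hxs
    exact ⟨⟨g, mem_nonZeroDivisors_of_ne_zero hg⟩, (Submodule.Quotient.mk_eq_zero N).mpr hgx⟩
  have htorsion : Module.IsTorsion R (M ⧸ N) := by
    intro y
    obtain ⟨x, rfl⟩ := N.mkQ_surjective y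
    exact hle (hS ▸ Submodule.mem_top)
  obtain ⟨f, hann, hf⟩ := Submodule.annihilator_top_inter_nonZeroDivisors htorsion
  refine ⟨f, nonZeroDivisors.ne_zero hf, fun x => ?_⟩
  exact (Submodule.Quotient.mk_eq_zero N).mp
    (Submodule.mem_annihilator.mp hann (N.mkQ x) Submodule.mem_top)

theorem exists_not_isUnit_dvd_of_smul_mem [UniqueFactorizationMonoid R] [Module.IsTorsionFree R M]
    (N : Submodule R M) [Module.Free R N] {w : M} (hw : w ∉ N) {f : R} (hf : f ≠ 0)
    (hfw : f • w ∈ N) : ∃ q : R, ¬IsUnit q ∧ ∀ g : R, g • w ∈ N → q ∣ g := by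
  let b := Module.Free.chooseBasis R N
  obtain ⟨i, hi⟩ : ∃ i, ¬f ∣ b.repr ⟨f • w, hfw⟩ i := by
    by_contra! hdvd
    choose c hc using hdvd
    let n := ∑ i ∈ (b.repr ⟨f • w, hfw⟩).support, c i • b i
    have hn : f • n = ⟨f • w, hfw⟩ := by
      rw [← b.linearCombination_repr ⟨f • w, hfw⟩, Finsupp.linearCombination_apply, Finsupp.sum,
        Finset.smul_sum]
      exact Finset.sum_congr rfl fun i _ => by rw [smul_smul, ← hc]
    have hnw : (n : M) = w := smul_right_injective M hf (congrArg Subtype.val hn)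
    exact hw (hnw ▸ n.2)
  obtain ⟨q, p, c, hcoprime, rfl, hp⟩ :=
    UniqueFactorizationMonoid.exists_reduced_factors f hf (b.repr ⟨f • w, hfw⟩ i)
  refine ⟨q, fun hq => hi ?_, fun g hg => ?_⟩
  · rw [← hp]
    exact mul_dvd_mul_left c hq.dvd
  · have hcross : (c * q) • (⟨g • w, hg⟩ : N) = g • ⟨(c * q) • w, hfw⟩ :=
      Subtype.ext (smul_comm _ _ _)
    have hcoord : c * (q * b.repr ⟨g • w, hg⟩ i) = c * (g * p) := by
      rw [mul_left_comm c g p, hp, ← mul_assoc]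
      simpa only [map_smul, Finsupp.smul_apply, smul_eq_mul] using
        congrArg (fun x => b.repr x i) hcross
    have hdvd : q ∣ g * p := ⟨_, (mul_left_cancel₀ (left_ne_zero_of_mul hf) hcoord).symm⟩
    exact hcoprime.dvd_of_dvd_mul_right hdvd

end Domain

section SpanLE

open MvPolynomial

variable {σ k : Type*} [Field k]

theorem totalDegree_lt_totalDegree_mul {q h : MvPolynomial σ k} (hq : ¬IsUnit q)
    (hqh : q * h ≠ 0) : h.totalDegree < (q * h).totalDegree := by
  have hq0 : q ≠ 0 := left_ne_zero_of_mul hqh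
  have hdeg : q.totalDegree ≠ 0 := by
    intro hdeg
    rw [totalDegree_eq_zero_iff_eq_C] at hdeg
    rw [hdeg, Ne, map_eq_zero] at hq0
    exact hq (hdeg ▸ (isUnit_iff_ne_zero.mpr hq0).map C)
  rw [totalDegree_mul_of_isDomain hq0 (right_ne_zero_of_mul hqh)]
  exact Nat.lt_add_of_pos_left (Nat.pos_of_ne_zero hdeg)

theorem exists_totalDegree_le_homogeneousComponent_sub_eq_zero (r : MvPolynomial σ k) (m : ℕ) :
    ∃ r' : MvPolynomial σ k, r'.totalDegree ≤ m ∧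
      ∀ i ≤ m, homogeneousComponent i (r - r') = 0 := by
  refine ⟨∑ j ∈ Finset.range (m + 1), homogeneousComponent j r, ?_, fun i hi => ?_⟩
  · refine totalDegree_finsetSum_le fun j hj => ?_
    exact (homogeneousComponent_isHomogeneous j r).totalDegree_le.trans
      (Nat.lt_succ_iff.mp (Finset.mem_range.mp hj))
  · simp only [map_sub, map_sum, homogeneousComponent_of_mem (homogeneousComponent_mem _ r)]
    rw [Finset.sum_ite_eq, if_pos (Finset.mem_range.mpr (Nat.lt_succ_iff.mpr hi)), sub_self]

theorem finrank_restrictTotalDegree [Fintype σ] (m : ℕ) :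
    finrank k (restrictTotalDegree σ k m) = (m + Fintype.card σ).choose (Fintype.card σ) := by
  classical
  let s := (Finset.range (m + 1)).biUnion fun j =>
    Finset.finsuppAntidiag (Finset.univ : Finset σ) j
  have hs : {n : σ →₀ ℕ | (n.sum fun _ e => e) ≤ m} = s := by
    ext n
    simp [s, Finset.mem_finsuppAntidiag, Finsupp.sum_fintype]
  rw [restrictTotalDegree, finrank_eq_nat_card_basis (basisRestrictSupport k _), hs,
    Nat.card_coe_set_eq, Set.ncard_coe_finset, Finset.card_biUnion,
    ← Nat.sum_range_multichoose]
  · simp only [Finset.card_finsuppAntidiag_nat_eq_multichoose, Finset.card_univ]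
  · intro i _ j _ hij
    refine Finset.disjoint_left.mpr fun n hi hj => hij ?_
    rw [Finset.mem_finsuppAntidiag] at hi hj
    exact hi.1.symm.trans hj.1

variable {M ι : Type*} [AddCommGroup M] [Module (MvPolynomial σ k) M] [Module k M]
  [IsScalarTower k (MvPolynomial σ k) M] [Fintype ι]

variable (σ k) in
/-- The `k`-subspace of combinations of the family `v` with polynomial coefficients of total
degree at most `m`. When `v` lies in degree `a`, it is the truncation in degrees at most `m + a` of
the graded submodule generated by `v`. -/
noncomputable def spanLE (v : ι → M) (m : ℕ) : Submodule k M :=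
  LinearMap.range ((Fintype.linearCombination (MvPolynomial σ k) v).restrictScalars k ∘ₗ
    (restrictTotalDegree σ k m).subtype.compLeft ι)

theorem mem_spanLE {v : ι → M} {m : ℕ} {x : M} :
    x ∈ spanLE σ k v m ↔
      ∃ c : ι → MvPolynomial σ k, (∀ i, (c i).totalDegree ≤ m) ∧ ∑ i, c i • v i = x := by
  constructor
  · rintro ⟨c, rfl⟩
    exact ⟨fun i => c i, fun i => (mem_restrictTotalDegree _ _ _).mp (c i).2, rfl⟩
  · rintro ⟨c, hc, rfl⟩
    exact ⟨fun i => ⟨c i, (mem_restrictTotalDegree _ _ _).mpr (hc i)⟩, rfl⟩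

theorem mem_spanLE_unit {w : M} {m : ℕ} {x : M} :
    x ∈ spanLE σ k (fun _ : Unit => w) m ↔
      ∃ g : MvPolynomial σ k, g.totalDegree ≤ m ∧ g • w = x := by
  simp only [mem_spanLE, Fintype.sum_unique]
  exact ⟨fun ⟨c, hc, hx⟩ => ⟨c (), hc (), hx⟩, fun ⟨g, hg, hx⟩ => ⟨fun _ => g, fun _ => hg, hx⟩⟩

theorem spanLE_le_span (v : ι → M) (m : ℕ) :
    spanLE σ k v m ≤ (Submodule.span (MvPolynomial σ k) (Set.range v)).restrictScalars k := by
  intro x hx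
  obtain ⟨c, -, rfl⟩ := mem_spanLE.mp hx
  exact (Submodule.mem_span_range_iff_exists_fun _).mpr ⟨c, rfl⟩

instance finiteDimensional_spanLE [Finite σ] (v : ι → M) (m : ℕ) :
    FiniteDimensional k (spanLE σ k v m) :=
  Module.Finite.range _

variable [Fintype σ]

theorem finrank_spanLE_le (v : ι → M) (m : ℕ) :
    finrank k (spanLE σ k v m) ≤
      Fintype.card ι * (m + Fintype.card σ).choose (Fintype.card σ) := by
  refine (LinearMap.finrank_range_le _).trans_eq ?_
  simp [finrank_pi_fintype, finrank_restrictTotalDegree]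

theorem finrank_spanLE {v : ι → M} (hv : LinearIndependent (MvPolynomial σ k) v) (m : ℕ) :
    finrank k (spanLE σ k v m) =
      Fintype.card ι * (m + Fintype.card σ).choose (Fintype.card σ) := by
  refine (LinearMap.finrank_range_of_inj ?_).trans ?_
  · exact hv.fintypeLinearCombination_injective.comp Subtype.val_injective.comp_left
  · simp [finrank_pi_fintype, finrank_restrictTotalDegree]

theorem le_finrank_spanLE_sup [Module.IsTorsionFree (MvPolynomial σ k) M] {v : ι → M}
    (hv : LinearIndependent (MvPolynomial σ k) v) {w : M}
    (hw : w ∉ Submodule.span (MvPolynomial σ k) (Set.range v)) {f : MvPolynomial σ k} (hf : f ≠ 0)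
    (hfw : f • w ∈ Submodule.span (MvPolynomial σ k) (Set.range v)) (m : ℕ) :
    (Fintype.card ι + 1) * (m + 1 + Fintype.card σ).choose (Fintype.card σ) ≤
      finrank k ↥(spanLE σ k v (m + 1) ⊔ spanLE σ k (fun _ : Unit => w) (m + 1)) +
        (m + Fintype.card σ).choose (Fintype.card σ) := by
  have hfree := Module.Free.of_basis (Basis.span hv)
  obtain ⟨q, hq, hdvd⟩ := exists_not_isUnit_dvd_of_smul_mem _ hw hf hfw
  have hwv : LinearIndependent (MvPolynomial σ k) fun _ : Unit => w :=
    linearIndependent_unique_iff.mpr fun h => hw (h ▸ Submodule.zero_mem _)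
  have hinf : spanLE σ k v (m + 1) ⊓ spanLE σ k (fun _ : Unit => w) (m + 1) ≤
      spanLE σ k (fun _ : Unit => q • w) m := by
    rintro x ⟨hxv, hxw⟩
    obtain ⟨g, hg, rfl⟩ := mem_spanLE_unit.mp hxw
    obtain ⟨h, rfl⟩ := hdvd g (spanLE_le_span v _ hxv)
    rcases eq_or_ne (q * h) 0 with hqh | hqh
    · rw [hqh, zero_smul]
      exact Submodule.zero_mem _
    · refine mem_spanLE_unit.mpr ⟨h, ?_, by rw [mul_comm, mul_smul]⟩
      exact Nat.le_of_lt_succ ((totalDegree_lt_totalDegree_mul hq hqh).trans_le hg)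
  have hA := finrank_spanLE hv (m + 1)
  have hB := finrank_spanLE hwv (m + 1)
  have hC := (Submodule.finrank_mono hinf).trans (finrank_spanLE_le _ m)
  have hdim := Submodule.finrank_sup_add_finrank_inf_eq (spanLE σ k v (m + 1))
    (spanLE σ k (fun _ : Unit => w) (m + 1))
  rw [Fintype.card_unit, one_mul] at hB hC
  rw [add_one_mul]
  omega

end SpanLE

section Asymptotics

theorem choose_succ_add_succ (n j : ℕ) :
    (n + 1 + (j + 1)).choose (j + 1) = (n + 1 + j).choose j + (n + (j + 1)).choose (j + 1) := by
  rw [← add_assoc (n + 1) j 1, Nat.choose_succ_succ, add_assoc n 1 j, add_comm 1 j]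

theorem tendsto_choose_div_pow (c j : ℕ) :
    Tendsto (fun m : ℕ => ((m + c + j).choose j : ℝ) / (m : ℝ) ^ j) atTop
      (𝓝 (1 / (j.factorial : ℝ))) := by
  induction j with
  | zero => simp
  | succ j ih =>
    have hratio : Tendsto (fun m : ℕ => 1 + ((c + j + 1 : ℕ) : ℝ) / (m : ℝ)) atTop (𝓝 1) := by
      simpa using (tendsto_const_div_atTop_nhds_zero_nat ((c + j + 1 : ℕ) : ℝ)).const_add 1
    have hlim := (ih.mul hratio).div_const ((j + 1 : ℕ) : ℝ)
    rw [mul_one, div_div, mul_comm, ← Nat.cast_mul, ← Nat.factorial_succ] at hlim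
    refine hlim.congr' ?_
    filter_upwards [eventually_gt_atTop 0] with m hm
    have hm' : (m : ℝ) ≠ 0 := by positivity
    have hchoose : ((m + c + j + 1 : ℕ) : ℝ) * ((m + c + j).choose j : ℝ) =
        ((m + c + (j + 1)).choose (j + 1) : ℝ) * ((j + 1 : ℕ) : ℝ) := by
      exact_mod_cast Nat.add_one_mul_choose_eq (m + c + j) j
    rw [pow_succ]
    field_simp
    push_cast at hchoose ⊢
    linear_combination hchoose

theorem tendsto_choose_sub_choose_div_pow (c j : ℕ) :
    Tendsto (fun m : ℕ => (((m + c + (j + 1)).choose (j + 1) : ℝ) -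
      ((m + (j + 1)).choose (j + 1) : ℝ)) / (m : ℝ) ^ j) atTop (𝓝 (c / (j.factorial : ℝ))) := by
  induction c with
  | zero => simp
  | succ c ih =>
    have hlim := ih.add (tendsto_choose_div_pow (c + 1) j)
    rw [← add_div, ← Nat.cast_add_one] at hlim
    refine hlim.congr fun m => ?_
    rw [← add_assoc m c 1, choose_succ_add_succ]
    push_cast
    ring

/-- The value at `n` of the polynomial with Hilbert coefficients `e 0, …, e t` in dimension `t`, to
which the Hilbert sums in `IsHilbertPolyGraded` are eventually equal. -/
def hilbertSum (t : ℕ) (e : ℕ → ℤ) (n : ℕ) : ℤ :=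
  ∑ i ∈ Finset.range (t + 1), (-1) ^ i * e i * ((n + (t - i)).choose (t - i) : ℤ)

theorem hilbertSum_succ (t : ℕ) (e : ℕ → ℤ) (n : ℕ) :
    hilbertSum (t + 1) e n =
      e 0 * (n + (t + 1)).choose (t + 1) - hilbertSum t (fun i => e (i + 1)) n := by
  rw [hilbertSum, hilbertSum, Finset.sum_range_succ', sub_eq_add_neg, ← Finset.sum_neg_distrib,
    add_comm]
  simp only [pow_succ, Nat.add_sub_add_right]
  simp

theorem tendsto_hilbertSum_div_pow (t c : ℕ) (e : ℕ → ℤ) :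
    Tendsto (fun m : ℕ => (hilbertSum t e (m + c) : ℝ) / (m : ℝ) ^ t) atTop
      (𝓝 (e 0 / (t.factorial : ℝ))) := by
  induction t generalizing e with
  | zero => simp [hilbertSum]
  | succ t ih =>
    have htail := (ih fun i => e (i + 1)).mul (tendsto_inv_atTop_nhds_zero_nat (𝕜 := ℝ))
    have hlim := ((tendsto_choose_div_pow c (t + 1)).const_mul (e 0 : ℝ)).sub htail
    rw [mul_zero, sub_zero, mul_one_div] at hlim
    refine hlim.congr fun m => ?_
    rw [hilbertSum_succ, pow_succ]
    push_cast
    ring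

variable {t a : ℕ} {e : ℕ → ℤ} {H : ℕ → ℤ}

theorem tendsto_sub_choose_div_pow (hH : ∀ᶠ n in atTop, H n = hilbertSum (t + 1) e n) (a : ℕ) :
    Tendsto (fun m : ℕ => ((H (m + a) : ℝ) - e 0 * ((m + (t + 1)).choose (t + 1) : ℝ)) /
      (m : ℝ) ^ t) atTop (𝓝 ((a * e 0 - e 1) / (t.factorial : ℝ))) := by
  have hlim := ((tendsto_choose_sub_choose_div_pow a t).const_mul (e 0 : ℝ)).sub
    (tendsto_hilbertSum_div_pow t a fun i => e (i + 1))
  rw [← mul_div_assoc, ← sub_div, mul_comm] at hlim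
  refine hlim.congr' ?_
  filter_upwards [(tendsto_add_atTop_nat a).eventually hH] with m hm
  rw [hm, hilbertSum_succ]
  push_cast
  ring

theorem hilbertCoeff_zero_eq_of_le_of_le {r δ : ℕ} (hH : ∀ᶠ n in atTop, H n = hilbertSum t e n)
    (hlower : ∀ᶠ m in atTop, (r * (m + t).choose t : ℤ) ≤ H (m + a))
    (hupper : ∀ᶠ m in atTop, H (m + a) ≤ (r * (m + δ + t).choose t : ℤ)) : e 0 = r := by
  have hlim : Tendsto (fun m : ℕ => (H (m + a) : ℝ) / (m : ℝ) ^ t) atTop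
      (𝓝 (e 0 / (t.factorial : ℝ))) := by
    refine (tendsto_hilbertSum_div_pow t a e).congr' ?_
    filter_upwards [(tendsto_add_atTop_nat a).eventually hH] with m hm
    rw [hm]
  have hbound (c : ℕ) := (tendsto_choose_div_pow c t).const_mul (r : ℝ)
  simp only [← mul_div_assoc, mul_one] at hbound
  have hle : (r / t.factorial : ℝ) ≤ e 0 / t.factorial := by
    refine le_of_tendsto_of_tendsto (hbound 0) hlim ?_
    filter_upwards [hlower] with m hm
    gcongr
    exact_mod_cast hm
  have hge : (e 0 / t.factorial : ℝ) ≤ r / t.factorial := by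
    refine le_of_tendsto_of_tendsto hlim (hbound δ) ?_
    filter_upwards [hupper] with m hm
    gcongr
    exact_mod_cast hm
  have hfac : (t.factorial : ℝ) ≠ 0 := by positivity
  exact_mod_cast (div_left_inj' hfac).mp (hge.antisymm hle)

theorem hilbertCoeff_one_eq_of_eq {r : ℕ} (hH : ∀ᶠ n in atTop, H n = hilbertSum (t + 1) e n)
    (heq : ∀ᶠ m in atTop, H (m + a) = (r * (m + (t + 1)).choose (t + 1) : ℤ)) :
    e 1 = a * e 0 := by
  have he0 : e 0 = r := hilbertCoeff_zero_eq_of_le_of_le (δ := 0) hH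
    (heq.mono fun _ h => h.ge) (heq.mono fun _ h => h.le)
  have hzero : ((a * e 0 - e 1) / t.factorial : ℝ) = 0 := by
    refine tendsto_nhds_unique_of_eventuallyEq (tendsto_sub_choose_div_pow hH a)
      tendsto_const_nhds ?_
    filter_upwards [heq] with m hm
    rw [hm, he0]
    push_cast
    rw [sub_self, zero_div]
  have hfac : (t.factorial : ℝ) ≠ 0 := by positivity
  have hsub := (div_eq_zero_iff.mp hzero).resolve_right hfac
  exact_mod_cast (sub_eq_zero.mp hsub).symm

theorem hilbertCoeff_one_lt_of_lt {r δ : ℕ} (hH : ∀ᶠ n in atTop, H n = hilbertSum (t + 1) e n)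
    (hlower : ∀ᶠ m in atTop,
      (r * (m + (t + 1)).choose (t + 1) + (m + t).choose t : ℤ) ≤ H (m + a))
    (hupper : ∀ᶠ m in atTop, H (m + a) ≤ (r * (m + δ + (t + 1)).choose (t + 1) : ℤ)) :
    e 1 < a * e 0 := by
  have he0 : e 0 = r := hilbertCoeff_zero_eq_of_le_of_le hH
    (hlower.mono fun _ h => (le_add_of_nonneg_right (by positivity)).trans h) hupper
  have hgap : (1 / t.factorial : ℝ) ≤ (a * e 0 - e 1) / t.factorial := by
    refine le_of_tendsto_of_tendsto (tendsto_choose_div_pow 0 t)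
      (tendsto_sub_choose_div_pow hH a) ?_
    filter_upwards [hlower] with m hm
    gcongr
    rw [he0, add_zero, le_sub_iff_add_le']
    exact_mod_cast hm
  have hone : (1 : ℝ) ≤ a * e 0 - e 1 := (div_le_div_iff_of_pos_right (by positivity)).mp hgap
  have hlt : (e 1 : ℝ) < a * e 0 := by linarith
  exact_mod_cast hlt

end Asymptotics

/-- The sum of the components of `ℳ` of degree in `S`. The Hilbert sum of `ℳ` up to `n` is the
dimension of the truncation `gradedPart ℳ (Set.Iic n)`. -/
def gradedPart {k M : Type*} [Field k] [AddCommGroup M] [Module k M] (ℳ : ℕ → Submodule k M)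
    (S : Set ℕ) : Submodule k M :=
  ⨆ j ∈ S, ℳ j

theorem mem_gradedPart {k M : Type*} [Field k] [AddCommGroup M] [Module k M]
    {ℳ : ℕ → Submodule k M} {S : Set ℕ} {j : ℕ} (hj : j ∈ S) {x : M} (hx : x ∈ ℳ j) :
    x ∈ gradedPart ℳ S :=
  le_biSup ℳ hj hx

namespace IsGrading

open MvPolynomial

variable {k : Type*} [Field k] {d : ℕ} {M : Type*} [AddCommGroup M]
  [Module (MvPolynomial (Fin d) k) M] [Module k M] [IsScalarTower k (MvPolynomial (Fin d) k) M]
  {ℳ : ℕ → Submodule k M}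

theorem disjoint_gradedPart (hgr : IsGrading k d M ℳ) {S T : Set ℕ} (hST : Disjoint S T) :
    Disjoint (gradedPart ℳ S) (gradedPart ℳ T) :=
  hgr.1.submodule_iSupIndep.disjoint_biSup_biSup hST

theorem finrank_gradedPart (hgr : IsGrading k d M ℳ) [∀ j, FiniteDimensional k (ℳ j)]
    (s : Finset ℕ) : finrank k (gradedPart ℳ s) = ∑ j ∈ s, finrank k (ℳ j) := by
  induction s using Finset.induction_on with
  | empty => rw [gradedPart, Finset.coe_empty, iSup_emptyset, finrank_bot, Finset.sum_empty]
  | insert j s hj ih =>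
    have hdisj : Disjoint (ℳ j) (gradedPart ℳ s) :=
      hgr.1.submodule_iSupIndep.disjoint_biSup (Finset.mem_coe.not.mpr hj)
    have hfin : FiniteDimensional k (gradedPart ℳ s) := by
      change FiniteDimensional k ↥(⨆ j ∈ s, ℳ j)
      rw [← Finset.sup_eq_iSup]
      exact Submodule.finite_finset_sup s ℳ
    have hsup : gradedPart ℳ ↑(insert j s) = ℳ j ⊔ gradedPart ℳ s := by
      rw [gradedPart, Finset.coe_insert, iSup_insert, gradedPart]
    have hdim := Submodule.finrank_sup_add_finrank_inf_eq (ℳ j) (gradedPart ℳ s)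
    rw [hdisj.eq_bot, finrank_bot, add_zero] at hdim
    rw [hsup, hdim, ih, Finset.sum_insert hj]

theorem smul_mem_gradedPart (hgr : IsGrading k d M ℳ) {r : MvPolynomial (Fin d) k} {S T : Set ℕ}
    (hST : ∀ i, homogeneousComponent i r ≠ 0 → ∀ j ∈ S, i + j ∈ T) {x : M}
    (hx : x ∈ gradedPart ℳ S) : r • x ∈ gradedPart ℳ T := by
  suffices hle : gradedPart ℳ S ≤ (gradedPart ℳ T).comap
      ((LinearMap.lsmul (MvPolynomial (Fin d) k) M r).restrictScalars k) from hle hx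
  refine iSup₂_le fun j hj y hy => ?_
  change r • y ∈ gradedPart ℳ T
  rw [← sum_homogeneousComponent r, Finset.sum_smul]
  refine Submodule.sum_mem _ fun i _ => ?_
  rcases eq_or_ne (homogeneousComponent i r) 0 with hi | hi
  · rw [hi, zero_smul]
    exact Submodule.zero_mem _
  · exact le_biSup ℳ (hST i hi j hj) (hgr.2 i j _ (homogeneousComponent_mem i r) y hy)

theorem smul_mem_gradedPart_Iic (hgr : IsGrading k d M ℳ) {r : MvPolynomial (Fin d) k} {m n : ℕ}
    (hr : r.totalDegree ≤ m) {x : M} (hx : x ∈ gradedPart ℳ (Set.Iic n)) :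
    r • x ∈ gradedPart ℳ (Set.Iic (m + n)) := by
  refine hgr.smul_mem_gradedPart (fun i hi j hj => ?_) hx
  have hir : i ≤ r.totalDegree := not_lt.mp fun hlt => hi (homogeneousComponent_eq_zero i r hlt)
  exact Set.mem_Iic.mpr (add_le_add (hir.trans hr) hj)

variable {a : ℕ}

theorem spanLE_eq_inf (hgr : IsGrading k d M ℳ) {ι : Type*} [Fintype ι] {v : ι → M}
    (hv : ∀ i, v i ∈ ℳ a) (m : ℕ) :
    spanLE (Fin d) k v m =
      (Submodule.span (MvPolynomial (Fin d) k) (Set.range v)).restrictScalars k ⊓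
        gradedPart ℳ (Set.Iic (m + a)) := by
  have hle : spanLE (Fin d) k v m ≤ gradedPart ℳ (Set.Iic (m + a)) := by
    intro x hx
    obtain ⟨c, hc, rfl⟩ := mem_spanLE.mp hx
    exact Submodule.sum_mem _ fun i _ =>
      hgr.smul_mem_gradedPart_Iic (hc i) (mem_gradedPart Set.self_mem_Iic (hv i))
  refine (le_inf (spanLE_le_span v m) hle).antisymm ?_
  rintro x ⟨hx, hxm⟩
  obtain ⟨c, rfl⟩ := (Submodule.mem_span_range_iff_exists_fun _).mp hx
  choose c' hc' hcc' using fun i => exists_totalDegree_le_homogeneousComponent_sub_eq_zero (c i) m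
  have hmem : ∑ i, c' i • v i ∈ spanLE (Fin d) k v m := mem_spanLE.mpr ⟨c', hc', rfl⟩
  have hgt : ∑ i, c i • v i - ∑ i, c' i • v i ∈ gradedPart ℳ (Set.Ioi (m + a)) := by
    simp only [← Finset.sum_sub_distrib, ← sub_smul]
    refine Submodule.sum_mem _ fun i _ =>
      hgr.smul_mem_gradedPart (fun j hj n hn => ?_) (mem_gradedPart (Set.mem_singleton a) (hv i))
    rw [Set.mem_singleton_iff.mp hn]
    exact Nat.add_lt_add_right (not_le.mp fun hjm => hj (hcc' i j hjm)) a
  have heq := Submodule.disjoint_def.mp (hgr.disjoint_gradedPart (Set.Iic_disjoint_Ioi le_rfl)) _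
    (Submodule.sub_mem _ hxm (hle hmem)) hgt
  rwa [sub_eq_zero.mp heq]

theorem gradedPart_Iic_eq_spanLE (hgr : IsGrading k d M ℳ) {ι : Type*} [Fintype ι] {v : ι → M}
    (hv : ∀ i, v i ∈ ℳ a) (hspan : Submodule.span (MvPolynomial (Fin d) k) (Set.range v) = ⊤)
    (m : ℕ) : gradedPart ℳ (Set.Iic (m + a)) = spanLE (Fin d) k v m := by
  rw [hgr.spanLE_eq_inf hv, hspan, Submodule.restrictScalars_top, top_inf_eq]

theorem finiteDimensional_gradedPart_Iic (hgr : IsGrading k d M ℳ)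
    [Module.Finite (MvPolynomial (Fin d) k) M]
    (hgen : Submodule.span (MvPolynomial (Fin d) k) (ℳ a : Set M) = ⊤) (n : ℕ) :
    FiniteDimensional k (gradedPart ℳ (Set.Iic n)) := by
  obtain ⟨s, hs, hspan⟩ := (Submodule.fg_span_iff_fg_span_finset_subset (ℳ a : Set M)).mp
    (hgen ▸ Module.Finite.fg_top)
  have hrange : Set.range (Subtype.val : s → M) = s := Subtype.range_coe
  have heq := hgr.gradedPart_Iic_eq_spanLE (v := (Subtype.val : s → M)) (fun x => hs x.2)
    (by rw [hrange, ← hspan, hgen]) n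
  have hle : gradedPart ℳ (Set.Iic n) ≤ gradedPart ℳ (Set.Iic (n + a)) :=
    biSup_mono fun j hj => hj.trans (Nat.le_add_right n a)
  have hfin : FiniteDimensional k (gradedPart ℳ (Set.Iic (n + a))) :=
    heq ▸ finiteDimensional_spanLE _ n
  exact Submodule.finiteDimensional_of_le hle

theorem finiteDimensional_component (hgr : IsGrading k d M ℳ)
    [Module.Finite (MvPolynomial (Fin d) k) M]
    (hgen : Submodule.span (MvPolynomial (Fin d) k) (ℳ a : Set M) = ⊤) (j : ℕ) :
    FiniteDimensional k (ℳ j) := by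
  have hfin := hgr.finiteDimensional_gradedPart_Iic hgen j
  have hle : ℳ j ≤ gradedPart ℳ (Set.Iic j) := fun _ => mem_gradedPart Set.self_mem_Iic
  exact Submodule.finiteDimensional_of_le hle

theorem finrank_gradedPart_Iic_le [Module.IsTorsionFree (MvPolynomial (Fin d) k) M]
    (hgr : IsGrading k d M ℳ) {ι : Type*} [Fintype ι] {v : ι → M}
    (hv : ∀ i, v i ∈ ℳ a) {f : MvPolynomial (Fin d) k} (hf : f ≠ 0)
    (hfv : ∀ x : M, f • x ∈ Submodule.span (MvPolynomial (Fin d) k) (Set.range v)) (m : ℕ) :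
    finrank k (gradedPart ℳ (Set.Iic (m + a))) ≤
      Fintype.card ι * (m + f.totalDegree + d).choose d := by
  let μ : M →ₗ[k] M := (LinearMap.lsmul (MvPolynomial (Fin d) k) M f).restrictScalars k
  have hμ : Function.Injective μ := smul_right_injective M hf
  have hle : (gradedPart ℳ (Set.Iic (m + a))).map μ ≤
      spanLE (Fin d) k v (m + f.totalDegree) := by
    rw [hgr.spanLE_eq_inf hv, add_assoc, add_left_comm]
    rintro _ ⟨x, hx, rfl⟩
    have hfx : f • x ∈ gradedPart ℳ (Set.Iic (f.totalDegree + (m + a))) :=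
      hgr.smul_mem_gradedPart_Iic le_rfl hx
    exact Submodule.mem_inf.mpr ⟨hfv x, hfx⟩
  calc finrank k (gradedPart ℳ (Set.Iic (m + a)))
      = finrank k ((gradedPart ℳ (Set.Iic (m + a))).map μ) :=
        (Submodule.equivMapOfInjective μ hμ _).finrank_eq
    _ ≤ finrank k (spanLE (Fin d) k v (m + f.totalDegree)) := Submodule.finrank_mono hle
    _ ≤ Fintype.card ι * (m + f.totalDegree + d).choose d :=
        (finrank_spanLE_le v _).trans_eq <| by rw [Fintype.card_fin]

theorem mem_gradedPart_Ici (hgr : IsGrading k d M ℳ)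
    (hgen : Submodule.span (MvPolynomial (Fin d) k) (ℳ a : Set M) = ⊤) (x : M) :
    x ∈ gradedPart ℳ (Set.Ici a) := by
  have hx : x ∈ Submodule.span (MvPolynomial (Fin d) k) (ℳ a : Set M) := hgen ▸ Submodule.mem_top
  induction hx using Submodule.span_induction with
  | mem x hx => exact mem_gradedPart Set.self_mem_Ici hx
  | zero => exact Submodule.zero_mem _
  | add x y _ _ hx hy => exact Submodule.add_mem _ hx hy
  | smul r x _ hx =>
    exact hgr.smul_mem_gradedPart (fun i _ j hj => hj.trans (Nat.le_add_left j i)) hx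

theorem smul_mem_gradedPart_Ioi (hgr : IsGrading k d M ℳ)
    (hgen : Submodule.span (MvPolynomial (Fin d) k) (ℳ a : Set M) = ⊤)
    {r : MvPolynomial (Fin d) k} (hr : r.coeff 0 = 0) (x : M) :
    r • x ∈ gradedPart ℳ (Set.Ioi a) := by
  refine hgr.smul_mem_gradedPart (fun i hi j hj => ?_) (hgr.mem_gradedPart_Ici hgen x)
  have hi0 : i ≠ 0 := by
    rintro rfl
    exact hi (by rw [homogeneousComponent_zero, hr, C_0])
  exact lt_add_of_pos_of_le (Nat.pos_of_ne_zero hi0) hj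

theorem finrank_component_le_finrank_of_free (hgr : IsGrading k d M ℳ)
    [Module.Finite (MvPolynomial (Fin d) k) M] [Module.Free (MvPolynomial (Fin d) k) M]
    (hgen : Submodule.span (MvPolynomial (Fin d) k) (ℳ a : Set M) = ⊤) :
    finrank k (ℳ a) ≤ finrank (MvPolynomial (Fin d) k) M := by
  let b := Module.Free.chooseBasis (MvPolynomial (Fin d) k) M
  let φ : ℳ a →ₗ[k] (Module.Free.ChooseBasisIndex (MvPolynomial (Fin d) k) M → k) :=
    (lcoeff k 0).compLeft _ ∘ₗ (b.equivFun.toLinearMap.restrictScalars k) ∘ₗ (ℳ a).subtype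
  have hφ : Function.Injective φ := by
    rw [injective_iff_map_eq_zero]
    intro x hx
    have hgt : (x : M) ∈ gradedPart ℳ (Set.Ioi a) := by
      rw [← b.sum_repr (x : M)]
      exact Submodule.sum_mem _ fun i _ =>
        hgr.smul_mem_gradedPart_Ioi hgen (congrFun hx i) (b i)
    exact Subtype.ext <| Submodule.disjoint_def.mp
      (hgr.disjoint_gradedPart (Set.Iic_disjoint_Ioi le_rfl)) _
      (mem_gradedPart Set.self_mem_Iic x.2) hgt
  rw [finrank_eq_card_chooseBasisIndex (MvPolynomial (Fin d) k) M, ← finrank_fintype_fun_eq_card k]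
  exact LinearMap.finrank_le_finrank_of_injective hφ

theorem exists_linearIndependent_span_eq_top_of_free (hgr : IsGrading k d M ℳ)
    [Module.Finite (MvPolynomial (Fin d) k) M] [Module.Free (MvPolynomial (Fin d) k) M]
    (hgen : Submodule.span (MvPolynomial (Fin d) k) (ℳ a : Set M) = ⊤) :
    ∃ v : Fin (finrank k (ℳ a)) → M, (∀ i, v i ∈ ℳ a) ∧
      LinearIndependent (MvPolynomial (Fin d) k) v ∧
      Submodule.span (MvPolynomial (Fin d) k) (Set.range v) = ⊤ := by
  have hfin : FiniteDimensional k (ℳ a) := hgr.finiteDimensional_component hgen a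
  let u := finBasis k (ℳ a)
  let v : Fin (finrank k (ℳ a)) → M := (ℳ a).subtype ∘ u
  have hspan : Submodule.span (MvPolynomial (Fin d) k) (Set.range v) = ⊤ := by
    have hspank : Submodule.span k (Set.range v) = ℳ a := by
      rw [Set.range_comp, Submodule.span_image, u.span_eq, Submodule.map_subtype_top]
    rw [← top_le_iff, ← hgen, Submodule.span_le]
    exact hspank.ge.trans (Submodule.span_le_restrictScalars k _ (Set.range v))
  refine ⟨v, fun i => (u i).2, ?_, hspan⟩
  exact linearIndependent_of_top_le_span_of_card_le_finrank hspan.ge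
    ((Fintype.card_fin _).trans_le (hgr.finrank_component_le_finrank_of_free hgen))

theorem eventually_finrank_gradedPart_Iic_eq (hgr : IsGrading k d M ℳ)
    [Module.Finite (MvPolynomial (Fin d) k) M]
    (hgen : Submodule.span (MvPolynomial (Fin d) k) (ℳ a : Set M) = ⊤) {t : ℕ} {e : ℕ → ℤ}
    (he : IsHilbertPolyGraded k ℳ t e) :
    ∀ᶠ n in atTop, (finrank k (gradedPart ℳ (Set.Iic n)) : ℤ) = hilbertSum t e n := by
  have hfin (j : ℕ) : FiniteDimensional k (ℳ j) := hgr.finiteDimensional_component hgen j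
  obtain ⟨n₀, hn₀⟩ := he
  filter_upwards [eventually_ge_atTop n₀] with n hn
  have hrange : (Set.Iic n) = (Finset.range (n + 1) : Finset ℕ) := by
    ext j
    simp
  rw [hrange, hgr.finrank_gradedPart, Nat.cast_sum, hn₀ n hn, hilbertSum]

theorem hilbertCoeff_one_eq_of_free (hgr : IsGrading k d M ℳ) (hd : 0 < d)
    [Module.Finite (MvPolynomial (Fin d) k) M] [Module.Free (MvPolynomial (Fin d) k) M]
    (hgen : Submodule.span (MvPolynomial (Fin d) k) (ℳ a : Set M) = ⊤) {e : ℕ → ℤ}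
    (he : IsHilbertPolyGraded k ℳ d e) : e 1 = a * e 0 := by
  obtain ⟨t, rfl⟩ := Nat.exists_eq_add_one.mpr hd
  obtain ⟨v, hva, hv, hspan⟩ := hgr.exists_linearIndependent_span_eq_top_of_free hgen
  refine hilbertCoeff_one_eq_of_eq (hgr.eventually_finrank_gradedPart_Iic_eq hgen he)
    (r := finrank k (ℳ a)) (Eventually.of_forall fun m => ?_)
  rw [hgr.gradedPart_Iic_eq_spanLE hva hspan, finrank_spanLE hv, Fintype.card_fin,
    Fintype.card_fin]
  push_cast
  rfl

theorem le_finrank_gradedPart_Iic [Module.Finite (MvPolynomial (Fin d) k) M]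
    [Module.IsTorsionFree (MvPolynomial (Fin d) k) M] (hgr : IsGrading k d M ℳ)
    (hgen : Submodule.span (MvPolynomial (Fin d) k) (ℳ a : Set M) = ⊤)
    {ι : Type*} [Fintype ι] {v : ι → M} (hva : ∀ i, v i ∈ ℳ a)
    (hv : LinearIndependent (MvPolynomial (Fin d) k) v) {w : M} (hwa : w ∈ ℳ a)
    (hw : w ∉ Submodule.span (MvPolynomial (Fin d) k) (Set.range v))
    {f : MvPolynomial (Fin d) k} (hf : f ≠ 0)
    (hfw : f • w ∈ Submodule.span (MvPolynomial (Fin d) k) (Set.range v)) (m : ℕ) :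
    (Fintype.card ι + 1) * (m + 1 + d).choose d ≤
      finrank k (gradedPart ℳ (Set.Iic (m + 1 + a))) + (m + d).choose d := by
  have hfin := hgr.finiteDimensional_gradedPart_Iic hgen (m + 1 + a)
  have hsup : spanLE (Fin d) k v (m + 1) ⊔ spanLE (Fin d) k (fun _ : Unit => w) (m + 1) ≤
      gradedPart ℳ (Set.Iic (m + 1 + a)) :=
    sup_le ((hgr.spanLE_eq_inf hva _).trans_le inf_le_right)
      ((hgr.spanLE_eq_inf (fun _ => hwa) _).trans_le inf_le_right)
  have hlower := le_finrank_spanLE_sup hv hw hf hfw m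
  rw [Fintype.card_fin] at hlower
  exact hlower.trans (Nat.add_le_add_right (Submodule.finrank_mono hsup) _)

theorem hilbertCoeff_one_lt_of_not_free (hgr : IsGrading k d M ℳ) (hd : 0 < d)
    [Module.Finite (MvPolynomial (Fin d) k) M] [Module.IsTorsionFree (MvPolynomial (Fin d) k) M]
    (hgen : Submodule.span (MvPolynomial (Fin d) k) (ℳ a : Set M) = ⊤)
    (hfree : ¬Module.Free (MvPolynomial (Fin d) k) M) {e : ℕ → ℤ}
    (he : IsHilbertPolyGraded k ℳ d e) : e 1 < a * e 0 := by
  obtain ⟨t, rfl⟩ := Nat.exists_eq_add_one.mpr hd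
  obtain ⟨s, hsa, hs, f, hf, hfs⟩ := exists_linearIndepOn_smul_mem_span hgen
  have hfin : Finite s := hs.linearIndependent.finite
  cases nonempty_fintype s
  have hrange : Set.range (Subtype.val : s → M) = s := Subtype.range_coe
  rw [← hrange] at hfs
  obtain ⟨w, hwa, hw⟩ : ∃ w ∈ ℳ a,
      w ∉ Submodule.span (MvPolynomial (Fin (t + 1)) k) (Set.range (Subtype.val : s → M)) := by
    by_contra! hle
    have htop : ⊤ ≤ Submodule.span (MvPolynomial (Fin (t + 1)) k)
        (Set.range (Subtype.val : s → M)) := hgen ▸ Submodule.span_le.mpr hle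
    exact hfree (Module.Free.of_basis (Basis.mk hs htop))
  refine hilbertCoeff_one_lt_of_lt (hgr.eventually_finrank_gradedPart_Iic_eq hgen he)
    (r := Fintype.card s) (δ := f.totalDegree) ?_ (Eventually.of_forall fun m => ?_)
  · filter_upwards [eventually_gt_atTop 0] with m hm
    obtain ⟨n, rfl⟩ := Nat.exists_eq_add_one.mpr hm
    have hgap := hgr.le_finrank_gradedPart_Iic hgen (fun i => hsa i.2) hs hwa hw hf (hfs w) n
    have hpascal := choose_succ_add_succ n t
    have hlower : Fintype.card s * (n + 1 + (t + 1)).choose (t + 1) + (n + 1 + t).choose t ≤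
        finrank k (gradedPart ℳ (Set.Iic (n + 1 + a))) := by
      rw [add_one_mul] at hgap
      omega
    exact_mod_cast hlower
  · exact_mod_cast hgr.finrank_gradedPart_Iic_le (fun i => hsa i.2) hf hfs m

end IsGrading

/-- **Corollary 5.5.** Let `R = k[x₁, …, x_d]`, `d ≥ 2`, be a polynomial ring over a field
`k` and let `M` be a nonzero finitely generated graded `R`-module generated in degree
`a ≥ 0`.  If `M` is torsion-free, then `e₁(M) ≤ a·e₀(M)`, with equality if and only if `M`
is a free `R`-module. -/
theorem graded_e1_le_a_e0 (k : Type*) [Field k] (d : ℕ) (hd : 2 ≤ d)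
    {M : Type*} [AddCommGroup M] [Module (MvPolynomial (Fin d) k) M] [Module k M]
    [IsScalarTower k (MvPolynomial (Fin d) k) M]
    [Module.Finite (MvPolynomial (Fin d) k) M] [Nontrivial M]
    [NoZeroSMulDivisors (MvPolynomial (Fin d) k) M]
    (ℳ : ℕ → Submodule k M) (hgr : IsGrading k d M ℳ)
    (a : ℕ)
    (hgen : Submodule.span (MvPolynomial (Fin d) k) (ℳ a : Set M) = ⊤)
    (hlow : ∀ j < a, ℳ j = ⊥)
    (e : ℕ → ℤ) (he : IsHilbertPolyGraded k ℳ d e) :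
    e 1 ≤ (a : ℤ) * e 0 ∧
      (e 1 = (a : ℤ) * e 0 ↔ Module.Free (MvPolynomial (Fin d) k) M) := by
  have hd0 : 0 < d := by omega
  by_cases hfree : Module.Free (MvPolynomial (Fin d) k) M
  · have heq := hgr.hilbertCoeff_one_eq_of_free hd0 hgen he
    exact ⟨heq.le, iff_of_true heq hfree⟩
  · have hlt := hgr.hilbertCoeff_one_lt_of_not_free hd0 hgen hfree he
    exact ⟨hlt.le, iff_of_false hlt.ne hfree⟩
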